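/- Let Y and X₁,…,X_m be {−1,+1}-valued random variables on a common probability space, with error indicators E_j = 1{X_j ≠ Y}. If the random vector (E₁,…,E_m) is independent of Y, then for every subset S ⊆ {1,…,m} and j ∉ S one has Λ_j(S) = 0, and consequently I(Y; X_j | X_S) = I(Y; X_j) − I(X_j; X_S) + I(E_j; E_S). -/

import Mathlib

open MeasureTheory ProbabilityTheory

/-- Shannon entropy (in nats) of a discrete random variable `X`:
`H(X) = ∑ₐ -P(X = a) log P(X = a)`, with the convention `0 log 0 = 0`. -/
noncomputable def shannonEntropy {Ω : Type*} [MeasureSpace Ω] {A : Type*}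
    (X : Ω → A) : ℝ :=
  ∑' a : A, Real.negMulLog ((ℙ {ω | X ω = a}).toReal)

/-- Shannon mutual information of discrete random variables:
`I(X;Y) = H(X) + H(Y) - H(X,Y)`. -/
noncomputable def mutualInfo {Ω : Type*} [MeasureSpace Ω] {A B : Type*}
    (X : Ω → A) (Y : Ω → B) : ℝ :=
  shannonEntropy X + shannonEntropy Y - shannonEntropy (fun ω => (X ω, Y ω))

/-- Conditional mutual information of discrete random variables:
`I(X;Y|Z) = H(X,Z) + H(Y,Z) - H(X,Y,Z) - H(Z)`. -/
noncomputable def condMutualInfo {Ω : Type*} [MeasureSpace Ω] {A B C : Type*}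
    (X : Ω → A) (Y : Ω → B) (Z : Ω → C) : ℝ :=
  shannonEntropy (fun ω => (X ω, Z ω)) + shannonEntropy (fun ω => (Y ω, Z ω))
    - shannonEntropy (fun ω => (X ω, Y ω, Z ω)) - shannonEntropy Z

/-- Conditional entropy of discrete random variables: `H(X|Z) = H(X,Z) - H(Z)`. -/
noncomputable def condEntropy {Ω : Type*} [MeasureSpace Ω] {A C : Type*}
    (X : Ω → A) (Z : Ω → C) : ℝ :=
  shannonEntropy (fun ω => (X ω, Z ω)) - shannonEntropy Z

/-- The error indicator of a prediction `X` against the label `Y`: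
`E = 1` if `X ≠ Y` and `E = 0` otherwise. -/
def errInd {Ω : Type*} (Y X : Ω → ℤ) (ω : Ω) : ℕ :=
  if X ω ≠ Y ω then 1 else 0

/-! Once `Y` is known, `X_j` and `E_j` determine each other, so every joint entropy containing `Y`
is unchanged when predictions are replaced by errors. Expanding all terms into entropies then gives
`I(Y;X_j|X_S) = I(Y;X_j) - I(X_j;X_S) + I(E_j;E_S) + Λ_j(S)` under any joint law, and if the errors
are independent of `Y`, both terms of `Λ_j(S)` vanish. -/

section Entropy

variable {Ω : Type*} [MeasureSpace Ω] {A B C : Type*}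

theorem measure_fiber_eq_zero_of_notMem_range {X : Ω → A} {a : A} (ha : a ∉ Set.range X) :
    ℙ {ω | X ω = a} = 0 := by
  have hempty : {ω | X ω = a} = ∅ := Set.preimage_singleton_eq_empty.mpr ha
  rw [hempty, measure_empty]

theorem shannonEntropy_eq_sum {X : Ω → A} {s : Finset A} (hs : Set.range X ⊆ s) :
    shannonEntropy X = ∑ a ∈ s, Real.negMulLog (ℙ {ω | X ω = a}).toReal := by
  refine tsum_eq_sum fun a ha => ?_
  rw [measure_fiber_eq_zero_of_notMem_range fun h => ha (hs h), ENNReal.toReal_zero,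
    Real.negMulLog_zero]

theorem shannonEntropy_comp_of_injective {g : A → B} (hg : Function.Injective g) (X : Ω → A) :
    shannonEntropy (fun ω => g (X ω)) = shannonEntropy X := by
  have hsupp : Function.support (fun b => Real.negMulLog (ℙ {ω | g (X ω) = b}).toReal)
      ⊆ Set.range g := by
    refine Function.support_subset_iff'.mpr fun b hb => ?_
    have hb' : b ∉ Set.range fun ω => g (X ω) := fun ⟨ω, hω⟩ => hb ⟨X ω, hω⟩
    rw [measure_fiber_eq_zero_of_notMem_range hb', ENNReal.toReal_zero, Real.negMulLog_zero]
  simp only [shannonEntropy, ← hg.tsum_eq hsupp, hg.eq_iff]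

theorem shannonEntropy_eq_of_ker_eq {X : Ω → A} {Z : Ω → B} (h : Setoid.ker X = Setoid.ker Z) :
    shannonEntropy X = shannonEntropy Z :=
  calc
    shannonEntropy X = shannonEntropy (Quotient.mk (Setoid.ker X)) :=
      shannonEntropy_comp_of_injective (Setoid.kerLift_injective X) (Quotient.mk (Setoid.ker X))
    _ = shannonEntropy (Quotient.mk (Setoid.ker Z)) := by rw [h]
    _ = shannonEntropy Z :=
      (shannonEntropy_comp_of_injective (Setoid.kerLift_injective Z)
        (Quotient.mk (Setoid.ker Z))).symm

theorem mutualInfo_comm (X : Ω → A) (Y : Ω → B) : mutualInfo X Y = mutualInfo Y X := by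
  have hswap : shannonEntropy (fun ω => (X ω, Y ω)) = shannonEntropy (fun ω => (Y ω, X ω)) :=
    shannonEntropy_comp_of_injective Prod.swap_injective fun ω => (Y ω, X ω)
  rw [mutualInfo, mutualInfo, hswap]
  ring

theorem condMutualInfo_comm (X : Ω → A) (Y : Ω → B) (Z : Ω → C) :
    condMutualInfo X Y Z = condMutualInfo Y X Z := by
  have hswap : shannonEntropy (fun ω => (X ω, Y ω, Z ω))
      = shannonEntropy (fun ω => (Y ω, X ω, Z ω)) :=
    shannonEntropy_eq_of_ker_eq <| Setoid.ext fun ω ω' => by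
      simp only [Setoid.ker_def, Prod.mk.injEq, and_left_comm]
  rw [condMutualInfo, condMutualInfo, hswap]
  ring

end Entropy

section Independence

variable {Ω : Type*} [MeasureSpace Ω] [IsProbabilityMeasure (ℙ : Measure Ω)] {A B C : Type*}
  [MeasurableSpace A] [MeasurableSingletonClass A] [MeasurableSpace B] [MeasurableSingletonClass B]
  [MeasurableSpace C] [MeasurableSingletonClass C]

theorem sum_measure_fiber_eq_one {X : Ω → A} (hX : Measurable X) {s : Finset A}
    (hs : Set.range X ⊆ s) : ∑ a ∈ s, (ℙ {ω | X ω = a}).toReal = 1 :=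
  calc
    ∑ a ∈ s, (ℙ {ω | X ω = a}).toReal = (ℙ : Measure Ω).real (X ⁻¹' s) :=
      sum_measureReal_preimage_singleton s fun a _ => hX (measurableSet_singleton a)
    _ = 1 := by rw [Set.preimage_eq_univ_iff.mpr hs, probReal_univ]

theorem shannonEntropy_prodMk_of_indepFun {X : Ω → A} {Y : Ω → B} (hX : Measurable X)
    (hY : Measurable Y) (finX : (Set.range X).Finite) (finY : (Set.range Y).Finite)
    (hXY : IndepFun X Y ℙ) :
    shannonEntropy (fun ω => (X ω, Y ω)) = shannonEntropy X + shannonEntropy Y := by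
  have hs : Set.range X ⊆ finX.toFinset := finX.coe_toFinset.ge
  have ht : Set.range Y ⊆ finY.toFinset := finY.coe_toFinset.ge
  have hst : Set.range (fun ω => (X ω, Y ω)) ⊆ (finX.toFinset ×ˢ finY.toFinset : Finset _) := by
    rintro _ ⟨ω, rfl⟩
    exact Finset.mem_product.mpr ⟨hs ⟨ω, rfl⟩, ht ⟨ω, rfl⟩⟩
  have hmul : ∀ a b, (ℙ {ω | (X ω, Y ω) = (a, b)}).toReal
      = (ℙ {ω | X ω = a}).toReal * (ℙ {ω | Y ω = b}).toReal := fun a b => by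
    simp only [Prod.mk.injEq, ← ENNReal.toReal_mul]
    exact congrArg ENNReal.toReal (hXY.measure_inter_preimage_eq_mul {a} {b}
      (measurableSet_singleton a) (measurableSet_singleton b))
  rw [shannonEntropy_eq_sum hst, Finset.sum_product]
  simp only [hmul, Real.negMulLog_mul, Finset.sum_add_distrib, ← Finset.mul_sum, ← Finset.sum_mul]
  rw [sum_measure_fiber_eq_one hX hs, sum_measure_fiber_eq_one hY ht, one_mul, one_mul,
    ← shannonEntropy_eq_sum hs, ← shannonEntropy_eq_sum ht]

theorem mutualInfo_eq_zero_of_indepFun {X : Ω → A} {Y : Ω → B} (hX : Measurable X)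
    (hY : Measurable Y) (finX : (Set.range X).Finite) (finY : (Set.range Y).Finite)
    (hXY : IndepFun X Y ℙ) : mutualInfo X Y = 0 := by
  rw [mutualInfo, shannonEntropy_prodMk_of_indepFun hX hY finX finY hXY, sub_self]

theorem condMutualInfo_eq_zero_of_indepFun {X : Ω → A} {Y : Ω → B} {Z : Ω → C}
    (hX : Measurable X) (hY : Measurable Y) (hZ : Measurable Z) (finX : (Set.range X).Finite)
    (finY : (Set.range Y).Finite) (finZ : (Set.range Z).Finite)
    (hXYZ : IndepFun X (fun ω => (Y ω, Z ω)) ℙ) : condMutualInfo X Y Z = 0 := by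
  have finYZ : (Set.range fun ω => (Y ω, Z ω)).Finite :=
    (finY.prod finZ).subset <| Set.range_subset_iff.mpr fun ω => ⟨⟨ω, rfl⟩, ⟨ω, rfl⟩⟩
  have hXZ : IndepFun X Z ℙ := hXYZ.comp measurable_id measurable_snd
  rw [condMutualInfo, shannonEntropy_prodMk_of_indepFun hX hZ finX finZ hXZ,
    shannonEntropy_prodMk_of_indepFun hX (hY.prodMk hZ) finX finYZ hXYZ]
  ring

end Independence

/-- `X` and `E` carry the same information once `Y` is known: on each fibre of `Y`, either one
determines the other. The condition is required at every sample point, not almost surely. -/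
def SameInfoGiven {Ω A B C : Type*} (Y : Ω → A) (X : Ω → B) (E : Ω → C) : Prop :=
  ∀ ⦃ω ω' : Ω⦄, Y ω = Y ω' → (X ω = X ω' ↔ E ω = E ω')

namespace SameInfoGiven

section Constructions

variable {Ω A B C B' C' : Type*} {Y : Ω → A} {X : Ω → B} {E : Ω → C}

theorem prodMk {X' : Ω → B'} {E' : Ω → C'} (h : SameInfoGiven Y X E)
    (h' : SameInfoGiven Y X' E') :
    SameInfoGiven Y (fun ω => (X ω, X' ω)) (fun ω => (E ω, E' ω)) := fun ω ω' hY => by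
  simp only [Prod.mk.injEq, h hY, h' hY]

theorem pi {ι : Type*} {β γ : ι → Type*} {X : ∀ i, Ω → β i} {E : ∀ i, Ω → γ i}
    (h : ∀ i, SameInfoGiven Y (X i) (E i)) :
    SameInfoGiven Y (fun ω i => X i ω) (fun ω i => E i ω) := fun ω ω' hY => by
  simp only [funext_iff, h _ hY]

end Constructions

variable {Ω : Type*} [MeasureSpace Ω] {A B C B' C' : Type*} {Y : Ω → A} {X : Ω → B} {E : Ω → C}

theorem shannonEntropy_prodMk_eq (h : SameInfoGiven Y X E) :
    shannonEntropy (fun ω => (Y ω, X ω)) = shannonEntropy (fun ω => (Y ω, E ω)) :=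
  shannonEntropy_eq_of_ker_eq <| Setoid.ext fun ω ω' => by
    simp only [Setoid.ker_def, Prod.mk.injEq]
    exact and_congr_right fun hY => h hY

theorem condMutualInfo_decomposition {X' : Ω → B'} {E' : Ω → C'} (h : SameInfoGiven Y X E)
    (h' : SameInfoGiven Y X' E') :
    condMutualInfo Y X X'
      = mutualInfo Y X - mutualInfo X X' + mutualInfo E E'
        + (condMutualInfo E Y E' - mutualInfo E Y) := by
  rw [condMutualInfo_comm E, mutualInfo_comm E Y]
  simp only [condMutualInfo, mutualInfo, h.shannonEntropy_prodMk_eq, h'.shannonEntropy_prodMk_eq,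
    (h.prodMk h').shannonEntropy_prodMk_eq]
  ring

end SameInfoGiven

section ErrorIndicator

variable {Ω : Type*} {Y X : Ω → ℤ}

theorem measurable_errInd [MeasurableSpace Ω] (hY : Measurable Y) (hX : Measurable X) :
    Measurable (errInd Y X) :=
  .ite (measurableSet_eq_fun hX hY).compl measurable_const measurable_const

theorem finite_range_errInd (Y X : Ω → ℤ) : (Set.range (errInd Y X)).Finite :=
  Set.finite_range_ite Set.finite_range_const Set.finite_range_const

theorem sameInfoGiven_errInd {a b : ℤ} (hY : ∀ ω, Y ω = a ∨ Y ω = b)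
    (hX : ∀ ω, X ω = a ∨ X ω = b) : SameInfoGiven Y X (errInd Y X) := fun ω ω' h => by
  have htwo : X ω = X ω' ↔ (X ω = Y ω ↔ X ω' = Y ω') := by grind
  have herr : errInd Y X ω = errInd Y X ω' ↔ (X ω = Y ω ↔ X ω' = Y ω') := by grind [errInd]
  exact htwo.trans herr.symm

end ErrorIndicator

theorem decomposition_label_invariant_general
    {Ω : Type*} [MeasureSpace Ω] [IsProbabilityMeasure (ℙ : Measure Ω)]
    {ι A : Type*} {β γ : ι → Type*} [MeasurableSpace A] [MeasurableSingletonClass A]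
    [∀ i, MeasurableSpace (γ i)] [∀ i, MeasurableSingletonClass (γ i)]
    {Y : Ω → A} {X : ∀ i, Ω → β i} {E : ∀ i, Ω → γ i}
    (hY : Measurable Y) (hE : ∀ i, Measurable (E i))
    (finY : (Set.range Y).Finite) (finE : ∀ i, (Set.range (E i)).Finite)
    (hXE : ∀ i, SameInfoGiven Y (X i) (E i)) (hEY : IndepFun (fun ω i => E i ω) Y ℙ)
    (S : Finset ι) (j : ι) :
    condMutualInfo (E j) Y (fun ω (i : {i // i ∈ S}) => E i.1 ω) - mutualInfo (E j) Y = 0 ∧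
      condMutualInfo Y (X j) (fun ω (i : {i // i ∈ S}) => X i.1 ω)
        = mutualInfo Y (X j) - mutualInfo (X j) (fun ω (i : {i // i ∈ S}) => X i.1 ω)
          + mutualInfo (E j) (fun ω (i : {i // i ∈ S}) => E i.1 ω) := by
  have hES : Measurable fun ω (i : {i // i ∈ S}) => E i.1 ω :=
    measurable_pi_lambda _ fun i => hE i
  have finES : (Set.range fun ω (i : {i // i ∈ S}) => E i.1 ω).Finite :=
    (Set.Finite.pi' fun i : {i // i ∈ S} => finE i).subset <|
      Set.range_subset_iff.mpr fun ω i => ⟨ω, rfl⟩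
  have hproj : Measurable fun e : ∀ i, γ i => (e j, fun i : {i // i ∈ S} => e i.1) := by
    fun_prop
  have hmarginal : IndepFun (E j) Y ℙ := hEY.comp (measurable_pi_apply j) measurable_id
  have hjoint : IndepFun Y (fun ω => (E j ω, fun i : {i // i ∈ S} => E i.1 ω)) ℙ :=
    hEY.symm.comp measurable_id hproj
  have hΛ : condMutualInfo (E j) Y (fun ω (i : {i // i ∈ S}) => E i.1 ω)
      - mutualInfo (E j) Y = 0 := by
    rw [condMutualInfo_comm,
      condMutualInfo_eq_zero_of_indepFun hY (hE j) hES finY (finE j) finES hjoint,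
      mutualInfo_eq_zero_of_indepFun (hE j) hY (finE j) finY hmarginal, sub_zero]
  have hdecomp := (hXE j).condMutualInfo_decomposition
    (SameInfoGiven.pi fun i : {i // i ∈ S} => hXE i)
  exact ⟨hΛ, by rw [hdecomp, hΛ, add_zero]⟩

/-- **Decomposition under label-invariant errors.**
Let `Y` and `X₁,…,X_m` be `{-1,+1}`-valued random variables with error indicators
`E_j = 1{X_j ≠ Y}`.  If the random vector `(E₁,…,E_m)` is independent of `Y`, then for
every `S ⊆ {1,…,m}` and `j ∉ S` the correction term `Λ_j(S)` vanishes and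
`I(Y;X_j|X_S) = I(Y;X_j) - I(X_j;X_S) + I(E_j;E_S)`. -/
theorem decomposition_label_invariant
    {Ω : Type*} [MeasureSpace Ω] [IsProbabilityMeasure (ℙ : Measure Ω)]
    {m : ℕ} (Y : Ω → ℤ) (X : Fin m → Ω → ℤ)
    (hYm : Measurable Y) (hXm : ∀ j, Measurable (X j))
    (hYval : ∀ ω, Y ω = 1 ∨ Y ω = -1)
    (hXval : ∀ j ω, X j ω = 1 ∨ X j ω = -1)
    (hEindep : IndepFun (fun ω => fun i : Fin m => errInd Y (X i) ω) Y ℙ) :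
    ∀ (S : Finset (Fin m)) (j : Fin m), j ∉ S →
      (condMutualInfo (errInd Y (X j)) Y
            (fun ω => fun i : {i : Fin m // i ∈ S} => errInd Y (X i.1) ω)
          - mutualInfo (errInd Y (X j)) Y) = 0 ∧
      condMutualInfo Y (X j) (fun ω => fun i : {i : Fin m // i ∈ S} => X i.1 ω)
        = mutualInfo Y (X j)
          - mutualInfo (X j) (fun ω => fun i : {i : Fin m // i ∈ S} => X i.1 ω)
          + mutualInfo (errInd Y (X j))
              (fun ω => fun i : {i : Fin m // i ∈ S} => errInd Y (X i.1) ω) := by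
  have finY : (Set.range Y).Finite :=
    (Set.toFinite {1, -1}).subset (Set.range_subset_iff.mpr hYval)
  exact fun S j _ => decomposition_label_invariant_general hYm
    (fun i => measurable_errInd hYm (hXm i)) finY (fun i => finite_range_errInd Y (X i))
    (fun i => sameInfoGiven_errInd hYval (hXval i)) hEindep S j
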